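/- arXiv:0907.2098 — 3 statements merged into one kernel-verified Lean document; each statement's English description precedes it below -/
import Mathlib

section
/- Let K be a field of characteristic 0, let R = K[x_1,…,x_r] be a polynomial ring, n a positive integer, and u = b_1 x_1^n + … + b_m x_m^n with 2 ≤ m ≤ r and b_1,…,b_m ∈ K nonzero. Then the subring K[u] is integrally closed in R: any element of R integral over K[u] already lies in K[u]. -/
open MvPolynomial

theorem aux_der {A B : Type*} [CommRing A] [IsDomain A] [CommRing B] [IsDomain B] [Algebra A B]
    [CharZero A] (hinj : Function.Injective (algebraMap A B)) (D : Derivation A B B) (f : B) :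
    ∀ d : ℕ, ∀ p : Polynomial A, p ≠ 0 → p.natDegree ≤ d → Polynomial.aeval f p = 0 → D f = 0 := by
  intro d
  induction d with
  | zero =>
    intro p hp hd h0
    obtain ⟨a, rfl⟩ := Polynomial.natDegree_eq_zero.mp (Nat.le_zero.mp hd)
    rw [Polynomial.aeval_C] at h0
    exact absurd (by rw [(map_eq_zero_iff _ hinj).mp h0, Polynomial.C_0]) hp
  | succ d ih =>
    intro p hp hd h0
    by_cases hz : p.natDegree = 0
    · exact ih p hp (by omega) h0
    · have h1 := D.map_aeval p f
      rw [h0, map_zero, smul_eq_mul] at h1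
      rcases mul_eq_zero.mp h1.symm with h | h
      · refine ih p.derivative ?_ ?_ h
        · intro hc
          exact hz (Polynomial.natDegree_eq_zero_of_derivative_eq_zero hc)
        · have := Polynomial.natDegree_derivative_lt hz
          omega
      · exact h

theorem aux_anti {K : Type*} [Field K] [CharZero K] (P : Polynomial K) :
    ∃ Q : Polynomial K, Q.derivative = P := by
  induction P using Polynomial.induction_on' with
  | add p q hp hq =>
    obtain ⟨a, rfl⟩ := hp
    obtain ⟨b, rfl⟩ := hq
    exact ⟨a + b, by simp⟩
  | monomial n a =>
    refine ⟨Polynomial.monomial (n+1) (a / (n+1)), ?_⟩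
    rw [Polynomial.derivative_monomial]
    have : (n + 1 : K) ≠ 0 := by exact_mod_cast Nat.succ_ne_zero n
    simp [div_mul_cancel₀ _ this]

theorem aux_const {K σ : Type*} [Field K] [CharZero K] (f : MvPolynomial σ K)
    (h : ∀ i, pderiv i f = 0) : ∃ a, f = C a := by
  classical
  refine ⟨coeff 0 f, ?_⟩
  ext m
  rw [coeff_C]
  split_ifs with hm
  · rw [hm]
  · obtain ⟨i, hi⟩ : ∃ i, m i ≠ 0 := by
      by_contra! hc
      exact hm (by ext i; simp [hc])
    have h1 := coeff_pderiv (i := i) f (m - Finsupp.single i 1)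
    have hle : Finsupp.single i 1 ≤ m := by
      rw [Finsupp.single_le_iff]; omega
    rw [h i, tsub_add_cancel_of_le hle, coeff_zero] at h1
    rcases mul_eq_zero.mp h1.symm with h2 | h2
    · exact h2
    · exfalso
      exact Nat.cast_add_one_ne_zero _ h2

theorem aux_deg {K σ : Type*} [Field K] (f : MvPolynomial σ K) (i : σ)
    (h : pderiv i f ≠ 0) : (pderiv i f).totalDegree < f.totalDegree := by
  classical
  have key : ∀ m ∈ (pderiv i f).support, (m.sum fun _ e => e) + 1 ≤ f.totalDegree := by
    intro m hm
    rw [mem_support_iff, coeff_pderiv] at hm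
    have h2 := le_totalDegree (mem_support_iff.mpr (left_ne_zero_of_mul hm))
    rw [Finsupp.sum_add_index' (by simp) (by simp), Finsupp.sum_single_index rfl] at h2
    exact h2
  obtain ⟨m, hm⟩ := Finset.nonempty_iff_ne_empty.mpr (fun hc => h (support_eq_empty.mp hc))
  have := key m hm
  unfold totalDegree at key this ⊢
  rw [Finset.sup_lt_iff (by rw [Nat.bot_eq_zero]; omega)]
  intro m hm
  exact key m hm

theorem aux_comm {K σ : Type*} [Field K] (f : MvPolynomial σ K) (i j : σ) :
    pderiv i (pderiv j f) = pderiv j (pderiv i f) := by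
  classical
  ext m
  simp only [coeff_pderiv, Finsupp.add_apply]
  by_cases h : i = j
  · subst h; rfl
  · have h' : j ≠ i := fun e => h e.symm
    rw [add_right_comm]
    simp [Finsupp.single_apply, h, h']
    ring

theorem aux_main {K σ : Type*} [Field K] [CharZero K] (u : MvPolynomial σ K) (i j : σ)
    (h0 : pderiv i u ≠ 0)
    (hrel : ∀ p q : MvPolynomial σ K, p * pderiv j u = q * pderiv i u → pderiv i u ∣ p) :
    ∀ d : ℕ, ∀ f : MvPolynomial σ K, f.totalDegree < d →
      (∀ k l, pderiv k f * pderiv l u = pderiv l f * pderiv k u) →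
      f ∈ Algebra.adjoin K ({u} : Set (MvPolynomial σ K)) := by
  intro d
  induction d with
  | zero => intro f hf; omega
  | succ d ih =>
    intro f hd hf
    obtain ⟨g, hg⟩ := hrel _ _ (hf i j)
    have hk : ∀ k, pderiv k f = g * pderiv k u := by
      intro k
      apply mul_right_cancel₀ h0
      rw [hf k i, hg]; ring
    have hgm : g ∈ Algebra.adjoin K ({u} : Set (MvPolynomial σ K)) := by
      by_cases hg0 : g = 0
      · rw [hg0]; exact zero_mem _
      apply ih
      · have h1 := aux_deg f i (by rw [hg]; exact mul_ne_zero h0 hg0)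
        rw [hg, totalDegree_mul_of_isDomain h0 hg0] at h1
        omega
      · intro k l
        have h1 := aux_comm f k l
        rw [hk, hk, pderiv_mul, pderiv_mul, aux_comm u k l] at h1
        linear_combination h1
    rw [Algebra.adjoin_singleton_eq_range_aeval] at hgm
    obtain ⟨P, hP⟩ := hgm
    obtain ⟨Q, hQ⟩ := aux_anti P
    obtain ⟨a, ha⟩ := aux_const (f - Polynomial.aeval u Q) (by
      intro k
      rw [map_sub, Derivation.map_aeval, hQ, hk, smul_eq_mul]
      have hP' : Polynomial.aeval u P = g := hP
      rw [hP', sub_self])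
    rw [sub_eq_iff_eq_add.mp ha]
    refine add_mem (Subalgebra.algebraMap_mem _ a) ?_
    rw [Algebra.adjoin_singleton_eq_range_aeval]
    exact ⟨Q, rfl⟩

theorem aux_int {K σ : Type*} [Field K] [CharZero K] (u f : MvPolynomial σ K)
    (hf : IsIntegral (Algebra.adjoin K ({u} : Set (MvPolynomial σ K))) f) (k l : σ) :
    pderiv k f * pderiv l u = pderiv l f * pderiv k u := by
  let D : Derivation K (MvPolynomial σ K) (MvPolynomial σ K) :=
    pderiv l u • pderiv k - pderiv k u • pderiv l
  have hD : ∀ g, D g = pderiv l u * pderiv k g - pderiv k u * pderiv l g := fun g => rfl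
  have hDu : ∀ a ∈ Algebra.adjoin K ({u} : Set (MvPolynomial σ K)), D a = 0 := by
    intro a ha
    rw [Algebra.adjoin_singleton_eq_range_aeval] at ha
    obtain ⟨P, rfl⟩ := ha
    change D (Polynomial.aeval u P) = 0
    rw [Derivation.map_aeval, hD u]
    rw [mul_comm, sub_self, smul_zero]
  let D' : Derivation (Algebra.adjoin K ({u} : Set (MvPolynomial σ K)))
      (MvPolynomial σ K) (MvPolynomial σ K) :=
    { toFun := D
      map_add' := D.map_add
      map_smul' := by
        intro a x
        change D ((a : MvPolynomial σ K) * x) = (a : MvPolynomial σ K) * D x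
        rw [D.leibniz, hDu a a.2]
        simp
      map_one_eq_zero' := D.map_one_eq_zero
      leibniz' := D.leibniz }
  obtain ⟨p, hp, h0⟩ := hf
  have h1 : D' f = 0 := aux_der Subtype.val_injective D' f p.natDegree p hp.ne_zero le_rfl h0
  have h2 : D f = 0 := h1
  rw [hD] at h2
  linear_combination h2

/-- Let `K` be a field of characteristic 0 and `u = b₁x₁ⁿ + ⋯ + b_m x_mⁿ` in
`R = K[x₁,…,x_r]` with `2 ≤ m ≤ r` and all `bᵢ ≠ 0`. Then `K[u]` is integrally
closed in `R`. -/
theorem stmt6 {K : Type*} [Field K] [CharZero K] (r m n : ℕ)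
    (hm2 : 2 ≤ m) (hmr : m ≤ r) (hn : 0 < n)
    (b : Fin m → K) (hb : ∀ i, b i ≠ 0)
    (u : MvPolynomial (Fin r) K)
    (hu : u = ∑ i : Fin m, C (b i) * (X (Fin.castLE hmr i)) ^ n)
    (f : MvPolynomial (Fin r) K)
    (hf : IsIntegral (Algebra.adjoin K ({u} : Set (MvPolynomial (Fin r) K))) f) :
    f ∈ Algebra.adjoin K ({u} : Set (MvPolynomial (Fin r) K)) := by
  have hpd : ∀ i : Fin m, pderiv (Fin.castLE hmr i) u
      = C (b i * n) * X (Fin.castLE hmr i) ^ (n - 1) := by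
    intro i
    rw [hu, map_sum, Finset.sum_eq_single i]
    · rw [pderiv_C_mul, pderiv_pow, pderiv_X_self, C_mul, map_natCast]; ring
    · intro k _ hk
      rw [pderiv_C_mul, pderiv_pow, pderiv_X_of_ne (by simpa using hk)]; simp
    · simp
  have hn0 : (n : K) ≠ 0 := by exact_mod_cast hn.ne'
  let i0 : Fin m := ⟨0, by omega⟩
  let i1 : Fin m := ⟨1, by omega⟩
  have hne : Fin.castLE hmr i0 ≠ Fin.castLE hmr i1 := by
    simp [i0, i1, Fin.ext_iff]
  have hCu : ∀ i, IsUnit (C (b i * n) : MvPolynomial (Fin r) K) := fun i =>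
    (isUnit_iff_ne_zero.mpr (mul_ne_zero (hb i) hn0)).map C
  refine aux_main u (Fin.castLE hmr i0) (Fin.castLE hmr i1) ?_ ?_ (f.totalDegree + 1) f
    (Nat.lt_succ_self _) (aux_int u f hf)
  · rw [hpd]
    exact mul_ne_zero (hCu i0).ne_zero (pow_ne_zero _ (X_ne_zero _))
  · intro p q hpq
    rw [hpd] at hpq ⊢
    rw [(hCu i0).mul_left_dvd]
    rw [hpd] at hpq
    have hd : (X (Fin.castLE hmr i0) : MvPolynomial (Fin r) K) ^ (n - 1) ∣
        p * (C (b i1 * n) * X (Fin.castLE hmr i1) ^ (n - 1)) := by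
      rw [hpq]
      exact Dvd.intro_left (q * C (b i0 * n)) (by ring)
    refine (X_prime : Prime (X (Fin.castLE hmr i0) : MvPolynomial (Fin r) K)).pow_dvd_of_dvd_mul_right
      _ ?_ hd
    intro hc
    rcases X_prime.dvd_or_dvd hc with h | h
    · exact X_prime.not_unit (isUnit_of_dvd_unit h (hCu i1))
    · have h := X_prime.dvd_of_dvd_pow h
      rw [X_dvd_X] at h
      exact hne h
end

section
/- For any nonzero rational number a, the product over all places of ℚ (all primes p together with the archimedean place) of |a|_p equals 1 (the product formula). -/
theorem stmt10_aux_nat (n : ℕ) (hn : n ≠ 0) :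
    (Function.mulSupport fun p : Nat.Primes => padicNorm p (n : ℚ)).Finite ∧
    (n : ℚ) * ∏ᶠ p : Nat.Primes, padicNorm p (n : ℚ) = 1 := by
  induction n using Nat.recOnMul with
  | zero => exact absurd rfl hn
  | one =>
    simp
  | prime q hq =>
    have key : ∀ p : Nat.Primes, p ≠ ⟨q, hq⟩ → padicNorm p (q : ℚ) = 1 := by
      intro p hp
      have := Fact.mk p.2
      have := Fact.mk hq
      exact padicNorm.padicNorm_of_prime_of_ne (fun h => hp (Subtype.ext h))
    refine ⟨(Set.finite_singleton (⟨q, hq⟩ : Nat.Primes)).subset ?_, ?_⟩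
    · intro p hp
      by_contra h
      exact hp (key p h)
    · have h0 : ∏ᶠ p : Nat.Primes, padicNorm p (q : ℚ) = padicNorm q (q : ℚ) :=
        finprod_eq_single (α := Nat.Primes) (fun p : Nat.Primes => padicNorm p (q : ℚ)) ⟨q, hq⟩ key
      have h1 : padicNorm q (q : ℚ) = (q : ℚ)⁻¹ := padicNorm.padicNorm_p hq.one_lt
      rw [h0, h1]
      exact mul_inv_cancel₀ (by exact_mod_cast hn)
  | mul a b iha ihb =>
    obtain ⟨fa, ea⟩ := iha (left_ne_zero_of_mul hn)
    obtain ⟨fb, eb⟩ := ihb (right_ne_zero_of_mul hn)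
    have h : (fun p : Nat.Primes => padicNorm p ((a * b : ℕ) : ℚ)) =
        fun p : Nat.Primes => padicNorm p (a : ℚ) * padicNorm p (b : ℚ) := by
      funext p
      have := Fact.mk p.2
      rw [Nat.cast_mul, padicNorm.mul]
    rw [h]
    refine ⟨(fa.union fb).subset (Function.mulSupport_mul _ _), ?_⟩
    rw [finprod_mul_distrib fa fb, Nat.cast_mul, mul_mul_mul_comm, ea, eb, one_mul]

/-- The product formula for `ℚ`: for any nonzero rational `a`, the product of
`|a|_v` over all places (all primes together with the archimedean one) is 1. -/
theorem stmt10 (a : ℚ) (ha : a ≠ 0) :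
    |a| * ∏ᶠ p : Nat.Primes, padicNorm p a = 1 := by
  obtain ⟨fa, ea⟩ := stmt10_aux_nat a.num.natAbs (by simpa using ha)
  obtain ⟨fb, eb⟩ := stmt10_aux_nat a.den a.den_nz
  have habs : |a| = (a.num.natAbs : ℚ) / (a.den : ℚ) := by
    conv_lhs => rw [← Rat.num_div_den a]
    rw [abs_div, Nat.abs_cast, Nat.cast_natAbs, Int.cast_abs]
  have h : (fun p : Nat.Primes => padicNorm p a) = fun p : Nat.Primes =>
      padicNorm p (a.num.natAbs : ℚ) / padicNorm p (a.den : ℚ) := by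
    funext p
    have := Fact.mk p.2
    rw [← padicNorm.div, ← habs]
    rcases abs_choice a with h | h <;> rw [h]
    rw [padicNorm.neg]
  rw [h, finprod_div_distrib fa fb, habs, div_mul_div_comm, ea, eb, div_one]
end

section
/- If an algebraic curve C over an algebraically closed field K of characteristic 0 admits a non-constant dominant rational map from a projective space ℙ^r, then it admits a non-constant rational map from the projective line ℙ^1; consequently (by Lüroth's theorem) C is rational. Equivalently: if K ⊂ L ⊂ Ω is a tower of fields of characteristic 0 with K algebraically closed, Ω purely transcendental over K, and L of transcendence degree 1 over K, then L is purely transcendental over K. -/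
theorem luroth_key {K P Ω F : Type*} [Field K] [CommRing P] [IsDomain P] [IsIntegrallyClosed P]
    [Field Ω] [Field F] [Algebra K P] [Algebra P Ω] [Algebra K Ω] [IsScalarTower K P Ω]
    [IsFractionRing P Ω] [Algebra K F] (L : IntermediateField K Ω) (t : L)
    (halg : Algebra.IsAlgebraic (IntermediateField.adjoin K ({t} : Set L)) L)
    (φ : P →ₐ[K] F) (f g : P) (htfg : (t : Ω) * algebraMap P Ω g = algebraMap P Ω f)
    (hg : φ g ≠ 0) (htr : Transcendental K (φ f / φ g)) : Nonempty (L →ₐ[K] F) := by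
  have hp : (RingHom.ker φ).IsPrime := RingHom.ker_isPrime φ
  set S := (RingHom.ker φ).primeCompl with hSdef
  have hmem : ∀ x, x ∈ S ↔ φ x ≠ 0 := fun x => Iff.rfl
  have hS : S ≤ nonZeroDivisors P := (RingHom.ker φ).primeCompl_le_nonZeroDivisors
  let A := Localization.subalgebra.ofField Ω S hS
  have hinj : Function.Injective (algebraMap P Ω) := IsFractionRing.injective P Ω
  have hmemA : ∀ x : Ω, x ∈ A ↔ ∃ (a s : P) (_ : s ∈ S),
      x = algebraMap P Ω a * (algebraMap P Ω s)⁻¹ := fun x => Iff.rfl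
  have hunit : ∀ y : S, IsUnit ((φ : P →+* F) y) := fun y => ((hmem y).1 y.2).isUnit
  let ψ : A →+* F := IsLocalization.lift (M := S) hunit
  have hψ : ∀ a : P, ψ (algebraMap P A a) = φ a := fun a => IsLocalization.lift_eq hunit a
  have hne : ∀ s ∈ S, algebraMap P Ω s ≠ 0 := by
    intro s hs h0
    rw [map_eq_zero_iff _ hinj] at h0
    exact (hmem s).1 hs (by rw [h0, map_zero])
  have hψK : ∀ k : K, ∀ h, ψ ⟨algebraMap K Ω k, h⟩ = algebraMap K F k := by
    intro k h
    have : (⟨algebraMap K Ω k, h⟩ : A) = algebraMap P A (algebraMap K P k) := by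
      apply Subtype.ext
      change algebraMap K Ω k = algebraMap P Ω (algebraMap K P k)
      exact IsScalarTower.algebraMap_apply K P Ω k
    rw [this, hψ, AlgHom.commutes]
  let B : Subalgebra K Ω := A.restrictScalars K
  let ψB : B →ₐ[K] F := { (ψ : B →+* F) with commutes' := fun k => hψK k _ }
  have hinv : ∀ a : B, ψB a ≠ 0 → (a : Ω)⁻¹ ∈ B := by
    rintro ⟨a, ha⟩ h0
    obtain ⟨p, s, hs, rfl⟩ := (hmemA a).1 ha
    refine (hmemA _).2 ⟨s, p, ?_, by simp⟩
    rw [hmem]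
    intro hp0
    apply h0
    have h1 : (⟨_, ha⟩ : A) * algebraMap P A s = algebraMap P A p := by
      apply Subtype.ext
      change algebraMap P Ω p * (algebraMap P Ω s)⁻¹ * algebraMap P Ω s = algebraMap P Ω p
      rw [inv_mul_cancel_right₀ (hne s hs)]
    have h2 := congrArg ψ h1
    rw [map_mul, hψ, hψ, hp0] at h2
    exact (mul_eq_zero.1 h2).resolve_right ((hmem s).1 hs)
  have htB : (t : Ω) ∈ B := (hmemA _).2 ⟨f, g, hg, by
    rw [← htfg, mul_inv_cancel_right₀ (hne g hg)]⟩
  have hψt : ψB ⟨t, htB⟩ = φ f / φ g := by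
    rw [eq_div_iff hg]
    have h1 : (⟨t, htB⟩ : A) * algebraMap P A g = algebraMap P A f := Subtype.ext htfg
    have h2 := congrArg ψ h1
    rw [map_mul, hψ, hψ] at h2
    exact h2
  have haev : ∀ r : Polynomial K, ((Polynomial.aeval (t : Ω)) r) =
      ((Polynomial.aeval (⟨t, htB⟩ : B) r : B) : Ω) := fun r =>
    Polynomial.aeval_algHom_apply B.val (⟨t, htB⟩ : B) r
  have hKt : ∀ x : L, x ∈ IntermediateField.adjoin K ({t} : Set L) → (x : Ω) ∈ B := by
    intro x hx
    obtain ⟨r, s, rfl⟩ := (IntermediateField.mem_adjoin_simple_iff K _).1 hx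
    have hc : ∀ r : Polynomial K, ((Polynomial.aeval t r : L) : Ω) = Polynomial.aeval (t : Ω) r :=
      fun r => (Polynomial.aeval_algHom_apply L.val t r).symm
    rw [IntermediateField.coe_div, hc, hc, div_eq_mul_inv]
    by_cases hs : s = 0
    · simp [hs, B.zero_mem]
    rw [haev r, haev s]
    refine B.mul_mem (Subtype.property _) (hinv _ ?_)
    rw [← Polynomial.aeval_algHom_apply, hψt]
    intro h0
    exact hs ((transcendental_iff.1 htr) s h0)
  have : IsIntegrallyClosed A := isIntegrallyClosed_of_isLocalization A S hS
  have hLB : ∀ x : L, (x : Ω) ∈ B := by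
    intro x
    have hx : IsIntegral (IntermediateField.adjoin K ({t} : Set L)) x :=
      (halg.isAlgebraic x).isIntegral
    let ι : (IntermediateField.adjoin K ({t} : Set L)) →+* A :=
      { toFun := fun y => ⟨((y : L) : Ω), hKt y y.2⟩
        map_one' := rfl
        map_zero' := rfl
        map_mul' := fun _ _ => rfl
        map_add' := fun _ _ => rfl }
    obtain ⟨q, hq, hq0⟩ := hx
    have hxA : IsIntegral A (x : Ω) := by
      refine ⟨q.map ι, hq.map ι, ?_⟩
      rw [Polynomial.eval₂_map]
      have h3 := Polynomial.hom_eval₂ q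
        (algebraMap (IntermediateField.adjoin K ({t} : Set L)) L) (L.val : L →+* Ω) x
      rw [hq0, map_zero] at h3
      exact h3.symm
    obtain ⟨y, hy⟩ := IsIntegrallyClosed.isIntegral_iff.1 hxA
    rw [← hy]
    exact y.2
  exact ⟨ψB.comp
    { toFun := fun y => ⟨(y : Ω), hLB y⟩
      map_one' := rfl
      map_zero' := rfl
      map_mul' := fun _ _ => rfl
      map_add' := fun _ _ => rfl
      commutes' := fun _ => rfl }⟩

theorem luroth_line {K σ : Type*} [Field K] [Infinite K] (f g : MvPolynomial σ K) (hg : g ≠ 0)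
    (h : ∀ c : K, f ≠ MvPolynomial.C c * g) :
    ∃ φ : MvPolynomial σ K →ₐ[K] RatFunc K, φ g ≠ 0 ∧ Transcendental K (φ f / φ g) := by
  have hex : ∀ p : MvPolynomial σ K, p ≠ 0 → ∃ x, MvPolynomial.eval x p ≠ 0 := by
    intro p hp
    by_contra! hcon
    exact hp (MvPolynomial.funext (by simpa using hcon))
  obtain ⟨p, hp⟩ := hex g hg
  set c := MvPolynomial.eval p f / MvPolynomial.eval p g with hc
  obtain ⟨q, hq⟩ := hex _ (sub_ne_zero.2 (h c))
  let φ₀ : MvPolynomial σ K →ₐ[K] Polynomial K := MvPolynomial.aeval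
    fun i => Polynomial.C (p i) + Polynomial.X * Polynomial.C (q i - p i)
  have h0 : ∀ r, (φ₀ r).eval 0 = MvPolynomial.eval p r := by
    intro r
    have : (Polynomial.aeval (0 : K)).comp φ₀ = MvPolynomial.aeval p := by
      ext i; simp [φ₀]
    simpa [MvPolynomial.aeval_eq_eval] using DFunLike.congr_fun this r
  have h1 : ∀ r, (φ₀ r).eval 1 = MvPolynomial.eval q r := by
    intro r
    have : (Polynomial.aeval (1 : K)).comp φ₀ = MvPolynomial.aeval q := by
      ext i; simp [φ₀]
    simpa [MvPolynomial.aeval_eq_eval] using DFunLike.congr_fun this r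
  let j : Polynomial K →ₐ[K] RatFunc K := IsScalarTower.toAlgHom K (Polynomial K) (RatFunc K)
  have hj : Function.Injective j := RatFunc.algebraMap_injective K
  have hφg : j (φ₀ g) ≠ 0 := by
    rw [Ne, map_eq_zero_iff j hj]
    intro hz
    apply hp
    rw [← h0, hz, Polynomial.eval_zero]
  refine ⟨j.comp φ₀, hφg, RatFunc.transcendental_of_ne_C _ ?_⟩
  rintro ⟨d, hd⟩
  have hd' : φ₀ f = Polynomial.C d * φ₀ g := by
    apply hj
    rw [map_mul]
    have : j (φ₀ f) / j (φ₀ g) = RatFunc.C d := hd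
    rw [div_eq_iff hφg] at this
    rw [this]
    congr 1
  have e0 := congrArg (Polynomial.eval 0) hd'
  have e1 := congrArg (Polynomial.eval 1) hd'
  rw [Polynomial.eval_mul, Polynomial.eval_C, h0, h0] at e0
  rw [Polynomial.eval_mul, Polynomial.eval_C, h1, h1] at e1
  have hdc : c = d := by rw [hc, e0, mul_div_cancel_right₀ _ hp]
  apply hq
  rw [map_sub, map_mul, MvPolynomial.eval_C, e1, hdc, sub_self]

/-- Generalized Lüroth theorem: if `K ⊂ L ⊂ Ω` is a tower of fields of
characteristic 0 with `K` algebraically closed, `Ω` purely transcendental over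
`K`, and `L` of transcendence degree 1 over `K`, then `L` is purely
transcendental over `K`, i.e. `L = K(x)` for some element `x` transcendental
over `K`. -/
theorem stmt18 (K Ω : Type*) [Field K] [Field Ω] [Algebra K Ω]
    [IsAlgClosed K] [CharZero K]
    (hΩ : ∃ s : Set Ω, AlgebraicIndependent K ((↑) : s → Ω) ∧
      IntermediateField.adjoin K s = ⊤)
    (L : IntermediateField K Ω)
    (hL : ∃ t : L, IsTranscendenceBasis K (fun _ : Unit => t)) :
    ∃ x : L, Transcendental K x ∧
      IntermediateField.adjoin K ({x} : Set L) = ⊤ := by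
  obtain ⟨s, hs, hsT⟩ := hΩ
  obtain ⟨t, ht⟩ := hL
  have halg : Algebra.IsAlgebraic (IntermediateField.adjoin K ({t} : Set L)) L := by
    have := ht.isAlgebraic_field
    rwa [Set.range_const] at this
  have httr : Transcendental K t := ht.1.transcendental ()
  have : Infinite K := IsAlgClosed.instInfinite
  have hemb : Nonempty (L →ₐ[K] RatFunc K) := by
    let : Algebra (MvPolynomial s K) Ω :=
      (MvPolynomial.aeval ((↑) : s → Ω) : MvPolynomial s K →ₐ[K] Ω).toRingHom.toAlgebra
    have hmap : ∀ p : MvPolynomial s K, algebraMap (MvPolynomial s K) Ω p =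
        MvPolynomial.aeval ((↑) : s → Ω) p := fun _ => rfl
    have : IsScalarTower K (MvPolynomial s K) Ω := IsScalarTower.of_algebraMap_eq fun k => by
      rw [hmap, MvPolynomial.algebraMap_eq, MvPolynomial.aeval_C]
    have hinj : Function.Injective (algebraMap (MvPolynomial s K) Ω) := hs
    have hdiv : ∀ z : Ω, ∃ a b : MvPolynomial s K,
        z = algebraMap (MvPolynomial s K) Ω a / algebraMap (MvPolynomial s K) Ω b := by
      intro z
      have hz : z ∈ IntermediateField.adjoin K s := by rw [hsT]; trivial
      have hz' : z ∈ IntermediateField.adjoin K (Set.range ((↑) : s → Ω)) := by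
        rwa [Subtype.range_coe]
      obtain ⟨a, b, h⟩ := (IntermediateField.mem_adjoin_range_iff K _ _).1 hz'
      exact ⟨a, b, h⟩
    have : FaithfulSMul (MvPolynomial s K) Ω := (faithfulSMul_iff_algebraMap_injective _ _).2 hinj
    have : IsFractionRing (MvPolynomial s K) Ω := IsFractionRing.of_field _ _ hdiv
    obtain ⟨f, g, hfg⟩ := hdiv t
    have ht0 : ∀ c : K, (t : Ω) ≠ algebraMap K Ω c := by
      intro c hc
      apply httr
      have : t = algebraMap K L c := Subtype.ext hc
      rw [this]
      exact isAlgebraic_algebraMap c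
    have hg : g ≠ 0 := by
      rintro rfl
      exact ht0 0 (by rw [hfg]; simp)
    have hg' : algebraMap (MvPolynomial s K) Ω g ≠ 0 := by
      rwa [Ne, map_eq_zero_iff _ hinj]
    obtain ⟨φ, h1, h2⟩ := luroth_line f g hg (by
      rintro c rfl
      apply ht0 c
      rw [hfg, map_mul, mul_div_cancel_right₀ _ hg', hmap, MvPolynomial.aeval_C])
    exact luroth_key L t halg φ f g (by rw [hfg, div_mul_cancel₀ _ hg']) h1 h2
  obtain ⟨j⟩ := hemb
  let E := j.fieldRange
  have hE : E ≠ ⊥ := by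
    intro h
    have hmem : j t ∈ E := ⟨t, rfl⟩
    rw [h, IntermediateField.mem_bot] at hmem
    obtain ⟨c, hc⟩ := hmem
    apply httr
    have : t = algebraMap K L c := j.injective (hc.symm.trans (j.commutes c).symm)
    rw [this]
    exact isAlgebraic_algebraMap c
  obtain ⟨x, hx⟩ : RatFunc.Luroth.generator E ∈ E := RatFunc.Luroth.generator_mem
  have hx' : j x = RatFunc.Luroth.generator E := hx
  refine ⟨x, ?_, ?_⟩
  · have := RatFunc.Luroth.transcendental_generator hE
    rw [← hx'] at this
    intro h
    exact this (h.algHom j)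
  · apply IntermediateField.map_injective j
    rw [IntermediateField.adjoin_map, Set.image_singleton, hx', ← AlgHom.fieldRange_eq_map]
    exact RatFunc.Luroth.eq_adjoin_generator.symm
end
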